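/- Let A ∈ ℝ^{n×n}, B ∈ ℝ^{n×q}, let X ∈ ℝ^{2n×2n} be a symmetric matrix with blocks X¹¹, X¹², X²¹ = (X¹²)ᵀ, X²² ∈ ℝ^{n×n} such that X²² is negative definite, let P ∈ ℝ^{n×n} be symmetric positive definite, K ∈ ℝ^{q×n}, and define L = KP⁻¹. Then the 3n×3n block matrix [[−(X²²)⁻¹, P, 0], [P, −((AP + BK) + (AP + BK)ᵀ), −I + PX²¹], [0, −I + X¹²P, X¹¹]] is positive semidefinite if and only if for all x, η ∈ ℝⁿ: 2xᵀP⁻¹((A + BL)x + η) ≤ ηᵀX¹¹η + 2ηᵀX¹²x + xᵀX²²x. -/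

import Mathlib

open Matrix

/-!
A Schur complement against `-X₂₂⁻¹ ≻ 0` removes the first block row of the LMI. In the remaining
`2 × 2` block matrix, the congruence by `diag(P⁻¹, I)` undoes the substitution `x = P z`, `L P = K`
that made the condition affine in `(P, K)`; the result is the matrix of the quadratic form
`s(η, x) - V̇(x, η)`.
-/

section PosSemidef

variable {m n R : Type*} [Fintype n] [CommRing R] [PartialOrder R] [StarRing R]

theorem posSemidef_fromBlocks_transpose_iff [Fintype m] [TrivialStar R]
    {S : Matrix n n R} {D : Matrix m m R} (hS : S.IsSymm) (hD : D.IsSymm) (N : Matrix m n R) :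
    (fromBlocks S Nᵀ N D).PosSemidef ↔
      ∀ x η, 0 ≤ x ⬝ᵥ (S *ᵥ x) + 2 * (η ⬝ᵥ (N *ᵥ x)) + η ⬝ᵥ (D *ᵥ η) := by
  have hsymm : (fromBlocks S Nᵀ N D).IsHermitian :=
    isHermitian_iff_isSymm.mpr (hS.fromBlocks (transpose_transpose N) hD)
  have hform (x : n → R) (η : m → R) :
      Sum.elim x η ⬝ᵥ (fromBlocks S Nᵀ N D *ᵥ Sum.elim x η) =
        x ⬝ᵥ (S *ᵥ x) + 2 * (η ⬝ᵥ (N *ᵥ x)) + η ⬝ᵥ (D *ᵥ η) := by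
    simp only [fromBlocks_mulVec, Sum.elim_comp_inl, Sum.elim_comp_inr,
      sumElim_dotProduct_sumElim, dotProduct_add, dotProduct_transpose_mulVec]
    ring
  simp only [posSemidef_iff_dotProduct_mulVec, hsymm, true_and, star_trivial, ← hform]
  exact ⟨fun h x η ↦ h _, fun h v ↦ Sum.elim_comp_inl_inr v ▸ h (v ∘ Sum.inl) (v ∘ Sum.inr)⟩

theorem posSemidef_fromBlocks_congr_left [Finite m] [DecidableEq n] {T : Matrix n n R}
    (hT : IsUnit T) (S : Matrix n n R) (M : Matrix n m R) (N : Matrix m n R) (D : Matrix m m R) :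
    (fromBlocks (Tᴴ * S * T) (Tᴴ * M) (N * T) D).PosSemidef ↔
      (fromBlocks S M N D).PosSemidef := by
  classical
  have := Fintype.ofFinite m
  have hU : IsUnit (fromBlocks T 0 0 (1 : Matrix m m R)) :=
    isUnit_fromBlocks_zero₁₂.mpr ⟨hT, isUnit_one⟩
  rw [← hU.posSemidef_star_left_conjugate_iff (x := fromBlocks S M N D)]
  simp [star_eq_conjTranspose, fromBlocks_conjTranspose, fromBlocks_multiply]

end PosSemidef

section SchurComplement

variable {m n 𝕜 : Type*} [Fintype m] [DecidableEq m] [Finite n] [Field 𝕜] [PartialOrder 𝕜]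
  [StarRing 𝕜] [StarOrderedRing 𝕜]

theorem posSemidef_fromBlocks_neg_inv_iff {N : Matrix m m 𝕜} (hN : (-N).PosDef)
    (H : Matrix m n 𝕜) (D : Matrix n n 𝕜) :
    (fromBlocks (-N⁻¹) H Hᴴ D).PosSemidef ↔ (D + Hᴴ * N * H).PosSemidef := by
  have hN_unit : IsUnit N := by simpa using hN.isUnit.neg
  have hneg_inv : (-N)⁻¹ = -N⁻¹ := inv_eq_right_inv <| by
    rw [neg_mul_neg, mul_nonsing_inv _ ((isUnit_iff_isUnit_det N).mp hN_unit)]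
  have hpos : (-N⁻¹).PosDef := hneg_inv ▸ hN.inv
  let := hpos.isUnit.invertible
  have hinv_neg : (-N⁻¹)⁻¹ = -N := by
    rw [← hneg_inv, nonsing_inv_nonsing_inv _ ((isUnit_iff_isUnit_det _).mp hN.isUnit)]
  rw [PosDef.fromBlocks₁₁ _ _ hpos, hinv_neg]
  simp

end SchurComplement

section Dissipativity

variable {n m p R : Type*} [Fintype n] [Fintype m] [Fintype p] [CommRing R]

/-- `X`-dissipativity of the system `ẋ = F x + E η`, `y = C x` with storage function
`V(x) = xᵀ Q x` and supply rate `s(η, y) = [η; y]ᵀ X [η; y]`, as the pointwise inequality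
`V̇ ≤ s`. The symmetric matrix `X` is given by its blocks `X₁₁`, `X₁₂`, `X₂₂`, and
`V̇` is written as `2 xᵀ Q (F x + E η)`, which presupposes that `Q` is symmetric. -/
def IsDissipative [LE R] (Q F : Matrix n n R) (E : Matrix n m R) (C : Matrix p n R)
    (X₁₁ : Matrix m m R) (X₁₂ : Matrix m p R) (X₂₂ : Matrix p p R) : Prop :=
  ∀ (x : n → R) (η : m → R),
    2 * (x ⬝ᵥ (Q *ᵥ (F *ᵥ x + E *ᵥ η))) ≤
      η ⬝ᵥ (X₁₁ *ᵥ η) + 2 * (η ⬝ᵥ (X₁₂ *ᵥ (C *ᵥ x))) + (C *ᵥ x) ⬝ᵥ (X₂₂ *ᵥ (C *ᵥ x))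

variable [PartialOrder R] [IsOrderedAddMonoid R] [StarRing R] [TrivialStar R]

theorem isDissipative_iff_posSemidef {X₁₁ : Matrix m m R} {X₂₂ : Matrix p p R} (hX₁₁ : X₁₁.IsSymm)
    (hX₂₂ : X₂₂.IsSymm) (Q F : Matrix n n R) (E : Matrix n m R) (C : Matrix p n R)
    (X₁₂ : Matrix m p R) :
    IsDissipative Q F E C X₁₁ X₁₂ X₂₂ ↔
      (fromBlocks (Cᵀ * X₂₂ * C - (Q * F + (Q * F)ᵀ)) (X₁₂ * C - (Q * E)ᵀ)ᵀ
        (X₁₂ * C - (Q * E)ᵀ) X₁₁).PosSemidef := by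
  have hsymm : (Cᵀ * X₂₂ * C - (Q * F + (Q * F)ᵀ)).IsSymm :=
    IsSymm.sub (by simp [IsSymm, hX₂₂.eq, Matrix.mul_assoc]) (isSymm_add_transpose_self _)
  rw [posSemidef_fromBlocks_transpose_iff hsymm hX₁₁]
  refine forall₂_congr fun x η ↦ ?_
  rw [← sub_nonneg]
  have hsupply : (C *ᵥ x) ⬝ᵥ (X₂₂ *ᵥ (C *ᵥ x)) = x ⬝ᵥ ((Cᵀ * X₂₂ * C) *ᵥ x) := by
    rw [← mulVec_mulVec, ← mulVec_mulVec, dotProduct_transpose_mulVec, dotProduct_comm]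
  rw [hsupply]
  simp only [sub_mulVec, add_mulVec, mulVec_add, mulVec_mulVec, dotProduct_add,
    dotProduct_sub, dotProduct_transpose_mulVec]
  ring_nf

theorem isDissipative_nonsing_inv_iff_posSemidef [DecidableEq n] {P : Matrix n n R}
    (hP : P.IsSymm) (hP_unit : IsUnit P) {X₁₁ : Matrix m m R} {X₂₂ : Matrix p p R}
    (hX₁₁ : X₁₁.IsSymm) (hX₂₂ : X₂₂.IsSymm) (F : Matrix n n R) (E : Matrix n m R)
    (C : Matrix p n R) (X₁₂ : Matrix m p R) :
    IsDissipative P⁻¹ F E C X₁₁ X₁₂ X₂₂ ↔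
      (fromBlocks ((C * P)ᵀ * X₂₂ * (C * P) - (F * P + (F * P)ᵀ)) (X₁₂ * (C * P) - Eᵀ)ᵀ
        (X₁₂ * (C * P) - Eᵀ) X₁₁).PosSemidef := by
  have hmul_inv : P * P⁻¹ = 1 := mul_nonsing_inv P ((isUnit_iff_isUnit_det P).mp hP_unit)
  have hinv_mul : P⁻¹ * P = 1 := nonsing_inv_mul P ((isUnit_iff_isUnit_det P).mp hP_unit)
  have hPinv : (P⁻¹)ᵀ = P⁻¹ := by rw [transpose_nonsing_inv, hP.eq]
  have hblock₁₁ : Pᴴ * (Cᵀ * X₂₂ * C - (P⁻¹ * F + (P⁻¹ * F)ᵀ)) * P =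
      (C * P)ᵀ * X₂₂ * (C * P) - (F * P + (F * P)ᵀ) := by
    simp only [conjTranspose_eq_transpose_of_trivial, transpose_mul, hP.eq, hPinv, mul_sub, sub_mul,
      mul_add, add_mul, ← Matrix.mul_assoc, hmul_inv, Matrix.one_mul]
    simp only [Matrix.mul_assoc, hinv_mul, Matrix.mul_one]
  have hblock₂₁ : (X₁₂ * C - (P⁻¹ * E)ᵀ) * P = X₁₂ * (C * P) - Eᵀ := by
    rw [Matrix.sub_mul, transpose_mul, hPinv, Matrix.mul_assoc, Matrix.mul_assoc, hinv_mul,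
      Matrix.mul_one]
  rw [isDissipative_iff_posSemidef hX₁₁ hX₂₂, ← posSemidef_fromBlocks_congr_left hP_unit, hblock₁₁,
    conjTranspose_eq_transpose_of_trivial, ← transpose_mul, hblock₂₁]

end Dissipativity

section Synthesis

variable {n m p q 𝕜 : Type*} [Fintype n] [DecidableEq n] [Fintype m] [Fintype p]
  [Field 𝕜] [PartialOrder 𝕜] [StarRing 𝕜] [TrivialStar 𝕜]

theorem local_controller_synthesis_LMI_general [DecidableEq p] [Fintype q] [StarOrderedRing 𝕜]
    (A : Matrix n n 𝕜) (B : Matrix n q 𝕜) (E : Matrix n m 𝕜) (C : Matrix p n 𝕜)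
    {X₁₁ : Matrix m m 𝕜} (X₁₂ : Matrix m p 𝕜) {X₂₂ : Matrix p p 𝕜}
    (hX₁₁ : X₁₁.IsSymm) (hX₂₂ : (-X₂₂).PosDef)
    {P : Matrix n n 𝕜} (hP : P.IsSymm) (hP_unit : IsUnit P) (K : Matrix q n 𝕜) :
    (fromBlocks
      (-X₂₂⁻¹) (fromCols (C * P) 0)
      (fromRows (P * Cᵀ) 0)
      (fromBlocks
        (-((A * P + B * K) + (A * P + B * K)ᵀ)) (-E + P * Cᵀ * X₁₂ᵀ)
        (-Eᵀ + X₁₂ * (C * P)) X₁₁)).PosSemidef ↔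
      IsDissipative P⁻¹ (A + B * (K * P⁻¹)) E C X₁₁ X₁₂ X₂₂ := by
  have hclosedLoop : (A + B * (K * P⁻¹)) * P = A * P + B * K := by
    rw [Matrix.add_mul, Matrix.mul_assoc B, Matrix.mul_assoc K,
      nonsing_inv_mul P ((isUnit_iff_isUnit_det P).mp hP_unit), Matrix.mul_one]
  have hrows : fromRows (P * Cᵀ) 0 = (fromCols (C * P) (0 : Matrix p m 𝕜))ᴴ := by
    rw [conjTranspose_eq_transpose_of_trivial, transpose_fromCols, transpose_mul, hP.eq,
      transpose_zero]
  have hX₂₂symm : X₂₂.IsSymm := by simpa using (isHermitian_iff_isSymm.mp hX₂₂.isHermitian).neg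
  rw [isDissipative_nonsing_inv_iff_posSemidef hP hP_unit hX₁₁ hX₂₂symm, hclosedLoop, hrows,
    posSemidef_fromBlocks_neg_inv_iff hX₂₂, ← hrows, fromRows_mul, fromRows_mul_fromCols,
    fromBlocks_add]
  simp [sub_eq_add_neg, add_comm, hP.eq]

end Synthesis

/-- LMI-based synthesis of a local state-feedback gain `L = KP⁻¹` enforcing
X-dissipativity (with `X²² ≺ 0`) of `ẋ = (A + BL)x + η`, `y = x`, with storage
`V(x) = xᵀP⁻¹x`. -/
theorem local_controller_synthesis_LMI {n q : ℕ}
    (A : Matrix (Fin n) (Fin n) ℝ) (B : Matrix (Fin n) (Fin q) ℝ)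
    (X11 X12 X22 : Matrix (Fin n) (Fin n) ℝ)
    (hX11 : X11.IsSymm) (hX22 : X22.IsSymm) (hX22neg : (-X22).PosDef)
    (P : Matrix (Fin n) (Fin n) ℝ) (hP : P.PosDef)
    (K Lg : Matrix (Fin q) (Fin n) ℝ) (hL : Lg = K * P⁻¹) :
    (Matrix.fromBlocks
      (-(X22⁻¹)) (Matrix.fromCols P 0)
      (Matrix.fromRows P 0)
      (Matrix.fromBlocks
        (-((A * P + B * K) + (A * P + B * K)ᵀ)) (-1 + P * X12ᵀ)
        (-1 + X12 * P) X11)).PosSemidef ↔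
    ∀ x η : Fin n → ℝ,
      2 * (x ⬝ᵥ (P⁻¹ *ᵥ ((A + B * Lg) *ᵥ x + η))) ≤
        η ⬝ᵥ (X11 *ᵥ η) + 2 * (η ⬝ᵥ (X12 *ᵥ x)) + x ⬝ᵥ (X22 *ᵥ x) := by
  simpa [IsDissipative, hL] using local_controller_synthesis_LMI_general A B 1 1 X12 hX11 hX22neg
    (isHermitian_iff_isSymm.mp hP.isHermitian) hP.isUnit K
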